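/- arXiv:2405.14457 — 3 statements merged into one kernel-verified Lean document; each statement's English description precedes it below -/
import Mathlib

section
/- Let s > 0 and m, m' ∈ ℝ, and set μ = |m' − m| / s. Let P = N(m, s²) and Q = N(m', s²). Then for every randomized test φ : ℝ → [0,1] whose type I error α = ∫ φ dP lies in (0,1), the type II error satisfies 1 − ∫ φ dQ ≥ Φ(Φ⁻¹(1−α) − μ). (Neyman–Pearson lower bound: the trade-off function between two equal-variance Gaussians is bounded below by the Gaussian trade-off function G_μ.) -/
open MeasureTheory ProbabilityTheory Real

/-- The standard normal CDF `Φ`. -/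
noncomputable def Phi : ℝ → ℝ := fun x => cdf (gaussianReal 0 1) x

/-- The inverse `Φ⁻¹` of the standard normal CDF (as a function on `(0,1)`). -/
noncomputable def PhiInv : ℝ → ℝ := Function.invFun Phi

/-! By the Neyman–Pearson lemma, rejecting where the likelihood ratio `dQ/dP` is large is most
powerful at its level. For Gaussians of equal variance with `m ≤ m'` the likelihood ratio is
increasing, so the optimal rejection regions are the half-lines `(t, ∞)`, whose errors are values
of `Φ`; the case `m' ≤ m` follows by reflection. -/

open Set
open scoped NNReal ENNReal

section Cdf

variable (ρ : Measure ℝ) [IsProbabilityMeasure ρ] [NullSingletonClass ρ]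

lemma continuous_cdf : Continuous (cdf ρ) := by
  refine continuous_iff_continuousAt.2 fun x => ?_
  rw [(monotone_cdf ρ).continuousAt_iff_leftLim_eq_rightLim, StieltjesFunction.rightLim_eq]
  have no_jump : ENNReal.ofReal (cdf ρ x - Function.leftLim (cdf ρ) x) = 0 := by
    rw [← StieltjesFunction.measure_singleton, measure_cdf, measure_singleton]
  exact ((monotone_cdf ρ).leftLim_le le_rfl).antisymm
    (sub_nonpos.1 (ENNReal.ofReal_eq_zero.1 no_jump))

lemma Ioo_subset_range_cdf : Ioo 0 1 ⊆ range (cdf ρ) := by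
  rintro y ⟨hy0, hy1⟩
  obtain ⟨a, ha⟩ := ((tendsto_cdf_atBot ρ).eventually_lt_const hy0).exists
  obtain ⟨b, hb⟩ := ((tendsto_cdf_atTop ρ).eventually_const_lt hy1).exists
  exact mem_range_of_exists_le_of_exists_ge (continuous_cdf ρ) ⟨a, ha.le⟩ ⟨b, hb.le⟩

end Cdf

lemma Phi_PhiInv {y : ℝ} (hy : y ∈ Ioo (0 : ℝ) 1) : Phi (PhiInv y) = y :=
  have : NullSingletonClass (gaussianReal 0 1) := nullSingletonClass_gaussianReal one_ne_zero
  Function.invFun_eq (Ioo_subset_range_cdf (gaussianReal 0 1) hy)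

section NeymanPearson

variable {Ω : Type*} [MeasurableSpace Ω] {P Q : Measure Ω} {R : Set Ω} {k : ℝ≥0} {φ : Ω → ℝ}

lemma smul_restrict_le_restrict_withDensity {L : Ω → ℝ≥0∞} (hR : MeasurableSet R)
    (hL : ∀ x ∈ R, k ≤ L x) : k • P.restrict R ≤ (P.withDensity L).restrict R := by
  rw [restrict_withDensity hR, ENNReal.smul_def k, ← withDensity_const]
  exact withDensity_mono (ae_restrict_of_forall_mem hR hL)

lemma restrict_withDensity_le_smul_restrict {L : Ω → ℝ≥0∞} (hR : MeasurableSet R)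
    (hL : ∀ x ∈ R, L x ≤ k) : (P.withDensity L).restrict R ≤ k • P.restrict R := by
  rw [restrict_withDensity hR, ENNReal.smul_def k, ← withDensity_const]
  exact withDensity_mono (ae_restrict_of_forall_mem hR hL)

variable [IsFiniteMeasure P] [IsFiniteMeasure Q]

/-- The **Neyman–Pearson lemma**. The hypotheses `hPQ` and `hQP` express, without densities, that
the rejection region `R` thresholds the likelihood ratio `dQ/dP` at the level `k`. -/
theorem integral_sub_measureReal_le_of_restrict_le (hR : MeasurableSet R)
    (hPQ : k • P.restrict R ≤ Q.restrict R) (hQP : Q.restrict Rᶜ ≤ k • P.restrict Rᶜ)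
    (hφ : Measurable φ) (hφ01 : ∀ x, φ x ∈ Icc (0 : ℝ) 1) :
    ∫ x, φ x ∂Q - Q.real R ≤ k * (∫ x, φ x ∂P - P.real R) := by
  have int (ν : Measure Ω) [IsFiniteMeasure ν] : Integrable φ ν :=
    .of_mem_Icc 0 1 hφ.aemeasurable (.of_forall hφ01)
  have accepted_on_R : k * ∫ x in R, (1 - φ x) ∂P ≤ ∫ x in R, (1 - φ x) ∂Q := by
    rw [← smul_eq_mul, ← NNReal.smul_def, ← integral_smul_nnreal_measure]
    exact integral_mono_measure hPQ (.of_forall fun x => sub_nonneg.2 (hφ01 x).2)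
      ((integrable_const 1).sub (int _))
  have rejected_off_R : ∫ x in Rᶜ, φ x ∂Q ≤ k * ∫ x in Rᶜ, φ x ∂P := by
    rw [← smul_eq_mul, ← NNReal.smul_def, ← integral_smul_nnreal_measure]
    exact integral_mono_measure hQP (.of_forall fun x => (hφ01 x).1) (int _)
  have excess (ν : Measure Ω) [IsFiniteMeasure ν] :
      ∫ x, φ x ∂ν - ν.real R = ∫ x in Rᶜ, φ x ∂ν - ∫ x in R, (1 - φ x) ∂ν := by
    rw [← integral_add_compl hR (int ν), integral_sub (integrable_const 1) (int _),
      setIntegral_const, smul_eq_mul, mul_one]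
    ring
  rw [excess, excess]
  linarith

theorem integral_le_measureReal_of_restrict_le (hR : MeasurableSet R)
    (hPQ : k • P.restrict R ≤ Q.restrict R) (hQP : Q.restrict Rᶜ ≤ k • P.restrict Rᶜ)
    (hφ : Measurable φ) (hφ01 : ∀ x, φ x ∈ Icc (0 : ℝ) 1) (hlevel : ∫ x, φ x ∂P ≤ P.real R) :
    ∫ x, φ x ∂Q ≤ Q.real R :=
  sub_nonpos.1 <| (integral_sub_measureReal_le_of_restrict_le hR hPQ hQP hφ hφ01).trans <|
    mul_nonpos_of_nonneg_of_nonpos k.2 (sub_nonpos.2 hlevel)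

end NeymanPearson

section Gaussian

variable {m m' s t : ℝ} {v : ℝ≥0} {φ : ℝ → ℝ}

/-- The likelihood ratio of `N(m', v)` with respect to `N(m, v)`, for `v ≠ 0`; at `v = 0` division
by zero makes it the constant `1`. -/
noncomputable def gaussianLikelihoodRatio (m m' : ℝ) (v : ℝ≥0) (x : ℝ) : ℝ :=
  rexp (((m' - m) * x - (m' ^ 2 - m ^ 2) / 2) / v)

lemma measurable_gaussianLikelihoodRatio : Measurable (gaussianLikelihoodRatio m m' v) := by
  unfold gaussianLikelihoodRatio
  fun_prop

lemma monotone_gaussianLikelihoodRatio (h : m ≤ m') :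
    Monotone (gaussianLikelihoodRatio m m' v) := by
  intro x y hxy
  unfold gaussianLikelihoodRatio
  have := sub_nonneg.2 h
  gcongr

lemma gaussianPDFReal_mul_gaussianLikelihoodRatio (hv : v ≠ 0) (x : ℝ) :
    gaussianPDFReal m v x * gaussianLikelihoodRatio m m' v x = gaussianPDFReal m' v x := by
  simp only [gaussianPDFReal, gaussianLikelihoodRatio]
  rw [mul_assoc, ← Real.exp_add]
  congr 2
  field_simp
  ring

lemma gaussianReal_withDensity_gaussianLikelihoodRatio (hv : v ≠ 0) :
    (gaussianReal m v).withDensity (fun x => ENNReal.ofReal (gaussianLikelihoodRatio m m' v x)) =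
      gaussianReal m' v := by
  rw [gaussianReal_of_var_ne_zero m hv, gaussianReal_of_var_ne_zero m' hv,
    ← withDensity_mul _ (measurable_gaussianPDF m v)
      measurable_gaussianLikelihoodRatio.ennreal_ofReal]
  congr 1 with x
  rw [Pi.mul_apply, gaussianPDF, gaussianPDF, ← ENNReal.ofReal_mul (gaussianPDFReal_nonneg m v x),
    gaussianPDFReal_mul_gaussianLikelihoodRatio hv]

theorem integral_gaussianReal_le_measureReal_Ioi (hv : v ≠ 0) (hm : m ≤ m') (hφ : Measurable φ)
    (hφ01 : ∀ x, φ x ∈ Icc (0 : ℝ) 1)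
    (hlevel : ∫ x, φ x ∂gaussianReal m v ≤ (gaussianReal m v).real (Ioi t)) :
    ∫ x, φ x ∂gaussianReal m' v ≤ (gaussianReal m' v).real (Ioi t) := by
  have ratio := gaussianReal_withDensity_gaussianLikelihoodRatio (m := m) (m' := m') hv
  have hmono := monotone_gaussianLikelihoodRatio (v := v) hm
  refine integral_le_measureReal_of_restrict_le (P := gaussianReal m v)
    (k := (gaussianLikelihoodRatio m m' v t).toNNReal) measurableSet_Ioi ?_ ?_ hφ hφ01 hlevel
  · rw [← ratio]
    exact smul_restrict_le_restrict_withDensity measurableSet_Ioi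
      fun x hx => ENNReal.ofReal_le_ofReal (hmono (mem_Ioi.1 hx).le)
  · rw [← ratio]
    exact restrict_withDensity_le_smul_restrict measurableSet_Ioi.compl
      fun x hx => ENNReal.ofReal_le_ofReal (hmono (notMem_Ioi.1 hx))

lemma gaussianReal_map_sub_div (hs : s ≠ 0) (m : ℝ) :
    (gaussianReal m (s ^ 2).toNNReal).map (fun x => (x - m) / s) = gaussianReal 0 1 := by
  change Measure.map ((· / s) ∘ (· - m)) _ = _
  rw [← Measure.map_map (by fun_prop) (by fun_prop), gaussianReal_map_sub_const,
    gaussianReal_map_div_const, sub_self, zero_div]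
  congr 1
  ext
  simp [max_eq_left (sq_nonneg s), hs]

lemma gaussianReal_real_Ioi (hs : 0 < s) (m t : ℝ) :
    (gaussianReal m (s ^ 2).toNNReal).real (Ioi t) = 1 - Phi ((t - m) / s) := by
  have preimage_Iic : (fun x => (x - m) / s) ⁻¹' Iic ((t - m) / s) = Iic t := by
    ext x
    simp [div_le_div_iff_of_pos_right hs]
  rw [← compl_Iic, probReal_compl_eq_one_sub measurableSet_Iic, Phi, cdf_eq_real,
    ← gaussianReal_map_sub_div hs.ne' m, map_measureReal_apply (by fun_prop) measurableSet_Iic,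
    preimage_Iic]

theorem Phi_PhiInv_sub_le_one_sub_integral (hs : 0 < s) (hm : m ≤ m') (hφ : Measurable φ)
    (hφ01 : ∀ x, φ x ∈ Icc (0 : ℝ) 1)
    (hlevel : ∫ x, φ x ∂gaussianReal m (s ^ 2).toNNReal ∈ Ioo (0 : ℝ) 1) :
    Phi (PhiInv (1 - ∫ x, φ x ∂gaussianReal m (s ^ 2).toNNReal) - (m' - m) / s) ≤
      1 - ∫ x, φ x ∂gaussianReal m' (s ^ 2).toNNReal := by
  set α := ∫ x, φ x ∂gaussianReal m (s ^ 2).toNNReal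
  set z := PhiInv (1 - α)
  have hz : Phi z = 1 - α := Phi_PhiInv ⟨by linarith [hlevel.2], by linarith [hlevel.1]⟩
  have hv : (s ^ 2).toNNReal ≠ 0 := (Real.toNNReal_pos.2 (by positivity)).ne'
  have level_eq : (gaussianReal m (s ^ 2).toNNReal).real (Ioi (m + s * z)) = α := by
    rw [gaussianReal_real_Ioi hs, add_sub_cancel_left, mul_div_cancel_left₀ z hs.ne', hz,
      sub_sub_cancel]
  have power_eq : (gaussianReal m' (s ^ 2).toNNReal).real (Ioi (m + s * z)) =
      1 - Phi (z - (m' - m) / s) := by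
    rw [gaussianReal_real_Ioi hs]
    congr 2
    field_simp
    ring
  linarith [integral_gaussianReal_le_measureReal_Ioi hv hm hφ hφ01 level_eq.ge]

lemma integral_comp_neg_gaussianReal {E : Type*} [NormedAddCommGroup E] [NormedSpace ℝ E]
    (f : ℝ → E) : ∫ x, f (-x) ∂gaussianReal (-m) v = ∫ x, f x ∂gaussianReal m v := by
  rw [← gaussianReal_map_neg]
  exact (integral_map_equiv (MeasurableEquiv.neg ℝ) fun x => f (-x)).trans (by simp)

end Gaussian

/-- Neyman–Pearson lower bound: the trade-off function between two equal-variance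
Gaussians is bounded below by the Gaussian trade-off function `G_μ`. -/
theorem stmt_0 (s m m' : ℝ) (hs : 0 < s) (μ : ℝ) (hμ : μ = |m' - m| / s)
    (P Q : Measure ℝ) (hP : P = gaussianReal m (s ^ 2).toNNReal)
    (hQ : Q = gaussianReal m' (s ^ 2).toNNReal)
    (φ : ℝ → ℝ) (hφmeas : Measurable φ) (hφ01 : ∀ x, φ x ∈ Set.Icc (0 : ℝ) 1)
    (α : ℝ) (hα : α = ∫ x, φ x ∂P) (hα01 : α ∈ Set.Ioo (0 : ℝ) 1) :
    1 - ∫ x, φ x ∂Q ≥ Phi (PhiInv (1 - α) - μ) := by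
  subst hP hQ hα hμ
  rcases le_total m m' with hm | hm
  · rw [abs_of_nonneg (sub_nonneg.2 hm)]
    exact Phi_PhiInv_sub_le_one_sub_integral hs hm hφmeas hφ01 hα01
  · have reflected := Phi_PhiInv_sub_le_one_sub_integral (φ := fun x => φ (-x)) hs
      (neg_le_neg hm) (hφmeas.comp measurable_neg) (fun x => hφ01 (-x))
    rw [integral_comp_neg_gaussianReal, integral_comp_neg_gaussianReal, neg_sub_neg] at reflected
    rw [abs_of_nonpos (sub_nonpos.2 hm), neg_sub]
    exact reflected hα01
end

section
/- Let s > 0 and m < m' ∈ ℝ, and set μ = (m' − m)/s. Let P = N(m, s²) and Q = N(m', s²). For any α ∈ (0,1), define the threshold h = m + s·Φ⁻¹(1−α) and the deterministic test φ(x) = 1 if x > h and φ(x) = 0 otherwise. Then ∫ φ dP = α and 1 − ∫ φ dQ = Φ(Φ⁻¹(1−α) − μ); that is, the one-sided threshold test attains the Gaussian trade-off function G_μ exactly. -/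
open MeasureTheory ProbabilityTheory Real

/-!
In a location–scale family, moving the location from `m` to `m'` at fixed scale `s` moves the
standardized threshold by `(m' - m) / s`. If the generating law is atomless, its cdf is continuous
and so attains every value in `(0, 1)`; hence the quantile threshold has type I error exactly `α`.
-/

section Cdf

variable (ν : Measure ℝ) [IsProbabilityMeasure ν]

lemma continuous_cdf_s1 [NullSingletonClass ν] : Continuous (cdf ν) := by
  refine continuous_iff_continuousAt.2 fun a => ?_
  have no_jump : cdf ν a ≤ Function.leftLim (cdf ν) a := by
    have hjump := (cdf ν).measure_singleton a
    rw [measure_cdf, measure_singleton] at hjump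
    exact sub_nonpos.1 (ENNReal.ofReal_eq_zero.1 hjump.symm)
  rw [(monotone_cdf ν).continuousAt_iff_leftLim_eq_rightLim, (cdf ν).rightLim_eq]
  exact le_antisymm ((monotone_cdf ν).leftLim_le le_rfl) no_jump

lemma Ioo_subset_range_cdf_s1 [NullSingletonClass ν] : Set.Ioo 0 1 ⊆ Set.range (cdf ν) := by
  rintro p ⟨hp0, hp1⟩
  obtain ⟨a, ha⟩ := ((tendsto_cdf_atBot ν).eventually_lt_const hp0).exists
  obtain ⟨b, hb⟩ := ((tendsto_cdf_atTop ν).eventually_const_lt hp1).exists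
  exact mem_range_of_exists_le_of_exists_ge (continuous_cdf_s1 ν) ⟨a, ha.le⟩ ⟨b, hb.le⟩

lemma integral_ite_gt_eq_one_sub_cdf (h : ℝ) :
    ∫ x, (if x > h then (1 : ℝ) else 0) ∂ν = 1 - cdf ν h :=
  calc ∫ x, (if x > h then (1 : ℝ) else 0) ∂ν
      = ∫ x, (Set.Ioi h).indicator 1 x ∂ν := rfl
    _ = ν.real (Set.Iic h)ᶜ := by rw [integral_indicator_one measurableSet_Ioi, Set.compl_Iic]
    _ = 1 - cdf ν h := by rw [probReal_compl_eq_one_sub measurableSet_Iic, cdf_eq_real]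

end Cdf

/-- The member with location `m` and scale `s` of the location–scale family generated by `ν`: the
law of `m + s * X` for `X` distributed as `ν`. -/
noncomputable def locationScale (ν : Measure ℝ) (m s : ℝ) : Measure ℝ :=
  ν.map fun x => m + s * x

instance (ν : Measure ℝ) [IsProbabilityMeasure ν] (m s : ℝ) :
    IsProbabilityMeasure (locationScale ν m s) :=
  Measure.isProbabilityMeasure_map (by fun_prop)

lemma locationScale_gaussianReal (μ : ℝ) (v : NNReal) (m s : ℝ) :
    locationScale (gaussianReal μ v) m s =
      gaussianReal (m + s * μ) ((s ^ 2).toNNReal * v) := by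
  have hcomp : (fun x : ℝ => m + s * x) = (m + ·) ∘ (s * ·) := rfl
  rw [locationScale, hcomp, ← Measure.map_map (by fun_prop) (by fun_prop),
    gaussianReal_map_const_mul, gaussianReal_map_const_add, add_comm,
    Real.toNNReal_of_nonneg (sq_nonneg s)]

lemma gaussianReal_eq_locationScale (m s : ℝ) :
    gaussianReal m (s ^ 2).toNNReal = locationScale (gaussianReal 0 1) m s := by
  rw [locationScale_gaussianReal, mul_zero, add_zero, mul_one]

lemma cdf_locationScale (ν : Measure ℝ) [IsProbabilityMeasure ν] {s : ℝ} (hs : 0 < s) (m x : ℝ) :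
    cdf (locationScale ν m s) x = cdf ν ((x - m) / s) := by
  have hpre : (fun y => m + s * y) ⁻¹' Set.Iic x = Set.Iic ((x - m) / s) := by
    ext y
    rw [Set.mem_preimage, Set.mem_Iic, Set.mem_Iic, le_div_iff₀' hs, le_sub_iff_add_le']
  rw [cdf_eq_real, cdf_eq_real, locationScale,
    map_measureReal_apply (by fun_prop) measurableSet_Iic, hpre]

lemma integral_ite_gt_locationScale (ν : Measure ℝ) [IsProbabilityMeasure ν] {s : ℝ} (hs : 0 < s)
    (m m' q : ℝ) :
    ∫ x, (if x > m + s * q then (1 : ℝ) else 0) ∂(locationScale ν m' s) =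
      1 - cdf ν (q - (m' - m) / s) := by
  have hstd : (m + s * q - m') / s = q - (m' - m) / s := by
    field_simp
    ring
  rw [integral_ite_gt_eq_one_sub_cdf, cdf_locationScale ν hs, hstd]

theorem stmt_1_general (ν : Measure ℝ) [IsProbabilityMeasure ν] [NullSingletonClass ν]
    {s : ℝ} (hs : 0 < s) (m m' : ℝ) {α : ℝ} (hα : α ∈ Set.Ioo (0 : ℝ) 1)
    {q : ℝ} (hq : q = Function.invFun (cdf ν) (1 - α)) :
    ∫ x, (if x > m + s * q then (1 : ℝ) else 0) ∂(locationScale ν m s) = α ∧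
      1 - ∫ x, (if x > m + s * q then (1 : ℝ) else 0) ∂(locationScale ν m' s) =
        cdf ν (q - (m' - m) / s) := by
  have hquantile : cdf ν q = 1 - α :=
    hq ▸ Function.invFun_eq (Ioo_subset_range_cdf_s1 ν (Set.Ioo.one_sub_mem hα))
  constructor
  · rw [integral_ite_gt_locationScale ν hs, sub_self, zero_div, sub_zero, hquantile, sub_sub_cancel]
  · rw [integral_ite_gt_locationScale ν hs, sub_sub_cancel]

/-- The one-sided threshold test at `h = m + s·Φ⁻¹(1−α)` attains the Gaussian
trade-off function `G_μ` exactly, for `P = N(m, s²)`, `Q = N(m', s²)`, `μ = (m'−m)/s`. -/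
theorem stmt_1 (s m m' : ℝ) (hs : 0 < s) (hmm' : m < m') (μ : ℝ) (hμ : μ = (m' - m) / s)
    (P Q : Measure ℝ) (hP : P = gaussianReal m (s ^ 2).toNNReal)
    (hQ : Q = gaussianReal m' (s ^ 2).toNNReal)
    (α : ℝ) (hα01 : α ∈ Set.Ioo (0 : ℝ) 1)
    (h : ℝ) (hh : h = m + s * PhiInv (1 - α))
    (φ : ℝ → ℝ) (hφ : φ = fun x => if x > h then (1 : ℝ) else 0) :
    (∫ x, φ x ∂P) = α ∧ 1 - ∫ x, φ x ∂Q = Phi (PhiInv (1 - α) - μ) := by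
  have : NullSingletonClass (gaussianReal 0 1) := nullSingletonClass_gaussianReal one_ne_zero
  subst hP hQ hφ hh hμ
  rw [gaussianReal_eq_locationScale m s, gaussianReal_eq_locationScale m' s]
  exact stmt_1_general (gaussianReal 0 1) hs m m' hα01 rfl
end

section
/- Let s > 0 and C > 0, and let P = N(0, s²) and Q = N(C, s²). Then for every randomized test φ : ℝ → [0,1], the sum of type I and type II errors satisfies ∫ φ dP + (1 − ∫ φ dQ) ≥ 2·Φ(−C/(2s)); i.e., no randomized test for distinguishing the two Gaussians has smaller total error than the midpoint threshold test at h* = C/2. -/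
open MeasureTheory ProbabilityTheory Real

/-!
Where the alternative `Q` dominates the null `P` it is best to reject, and elsewhere it is best to
accept: a set `A` of a Hahn decomposition of `(P, Q)` is therefore the rejection region of an
optimal test (Neyman–Pearson). For two Gaussians with the same variance the density of the nearer
mean is the larger one, so `A` is the half-line beyond the midpoint of the means, and both errors of
that test equal the normal tail at half the standardized distance of the means.
-/

open scoped NNReal ENNReal

section NeymanPearson

variable {α : Type*} {mα : MeasurableSpace α} {P Q : Measure α} {A : Set α}

/-- The total error of the randomized test `φ` of the null `P` against the alternative `Q`: the type
I error plus the type II error, where `φ x` is the probability of rejecting `P` on observing `x`. -/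
noncomputable def totalError (P Q : Measure α) (φ : α → ℝ) : ℝ :=
  (∫ x, φ x ∂P) + (1 - ∫ x, φ x ∂Q)

lemma totalError_indicator_one (hA : MeasurableSet A) :
    totalError P Q (A.indicator 1) = P.real A + (1 - Q.real A) := by
  rw [totalError, integral_indicator_one hA, integral_indicator_one hA]

lemma integral_le_integral_of_isHahnDecomposition (hA : IsHahnDecomposition P Q A) {f : α → ℝ}
    (hfP : Integrable f P) (hfQ : Integrable f Q)
    (hf_nonpos : ∀ x ∈ A, f x ≤ 0) (hf_nonneg : ∀ x ∈ Aᶜ, 0 ≤ f x) :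
    ∫ x, f x ∂Q ≤ ∫ x, f x ∂P := by
  have on_set : ∫ x in A, f x ∂Q ≤ ∫ x in A, f x ∂P := by
    have neg_mono : ∫ x in A, -f x ∂P ≤ ∫ x in A, -f x ∂Q :=
      integral_mono_measure hA.le_on
        (ae_restrict_of_forall_mem hA.measurableSet fun x hx ↦ neg_nonneg.2 (hf_nonpos x hx))
        hfQ.neg.integrableOn
    simpa only [integral_neg, neg_le_neg_iff] using neg_mono
  have on_compl : ∫ x in Aᶜ, f x ∂Q ≤ ∫ x in Aᶜ, f x ∂P :=
    integral_mono_measure hA.ge_on_compl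
      (ae_restrict_of_forall_mem hA.measurableSet.compl hf_nonneg) hfP.integrableOn
  rw [← integral_add_compl hA.measurableSet hfP, ← integral_add_compl hA.measurableSet hfQ]
  exact add_le_add on_set on_compl

theorem totalError_indicator_le_of_isHahnDecomposition [IsFiniteMeasure P] [IsFiniteMeasure Q]
    (hA : IsHahnDecomposition P Q A) {φ : α → ℝ} (hφP : AEMeasurable φ P) (hφQ : AEMeasurable φ Q)
    (hφ01 : ∀ x, φ x ∈ Set.Icc (0 : ℝ) 1) :
    totalError P Q (A.indicator 1) ≤ totalError P Q φ := by
  have hφP_int : Integrable φ P := .of_mem_Icc 0 1 hφP (.of_forall hφ01)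
  have hφQ_int : Integrable φ Q := .of_mem_Icc 0 1 hφQ (.of_forall hφ01)
  have hA_int (μ : Measure α) [IsFiniteMeasure μ] : Integrable (A.indicator (1 : α → ℝ)) μ :=
    (integrable_const 1).indicator hA.measurableSet
  have diff_le : ∫ x, (φ x - A.indicator 1 x) ∂Q ≤ ∫ x, (φ x - A.indicator 1 x) ∂P := by
    refine integral_le_integral_of_isHahnDecomposition hA
      (hφP_int.sub (hA_int P)) (hφQ_int.sub (hA_int Q)) (fun x hx ↦ ?_) (fun x hx ↦ ?_)
    · simpa [Set.indicator_of_mem hx] using (hφ01 x).2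
    · simpa [Set.indicator_of_notMem hx] using (hφ01 x).1
  rw [integral_sub hφQ_int (hA_int Q), integral_sub hφP_int (hA_int P)] at diff_le
  unfold totalError
  linarith

lemma isHahnDecomposition_withDensity {μ : Measure α} {f g : α → ℝ≥0∞} (hA : MeasurableSet A)
    (hfg : ∀ x ∈ A, f x ≤ g x) (hgf : ∀ x ∈ Aᶜ, g x ≤ f x) :
    IsHahnDecomposition (μ.withDensity f) (μ.withDensity g) A where
  measurableSet := hA
  le_on := by
    simpa only [restrict_withDensity hA] using withDensity_mono (ae_restrict_of_forall_mem hA hfg)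
  ge_on_compl := by
    simpa only [restrict_withDensity hA.compl] using
      withDensity_mono (ae_restrict_of_forall_mem hA.compl hgf)

end NeymanPearson

section Gaussian

variable {v : ℝ≥0} {a b x : ℝ}

lemma gaussianPDF_le_gaussianPDF_of_abs_sub_le (h : |x - b| ≤ |x - a|) :
    gaussianPDF a v x ≤ gaussianPDF b v x := by
  unfold gaussianPDF gaussianPDFReal
  gcongr ENNReal.ofReal (_ * rexp (-?_ / _))
  exact sq_le_sq.2 h

lemma isHahnDecomposition_gaussianReal_Ici (hv : v ≠ 0) (hab : a ≤ b) :
    IsHahnDecomposition (gaussianReal a v) (gaussianReal b v) (Set.Ici ((a + b) / 2)) := by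
  have sq_sub_sq (x : ℝ) :
      (x - a) ^ 2 - (x - b) ^ 2 = 2 * ((b - a) * (x - (a + b) / 2)) := by ring
  rw [gaussianReal_of_var_ne_zero a hv, gaussianReal_of_var_ne_zero b hv]
  refine isHahnDecomposition_withDensity measurableSet_Ici (fun x hx ↦ ?_) (fun x hx ↦ ?_) <;>
    refine gaussianPDF_le_gaussianPDF_of_abs_sub_le (sq_le_sq.1 ?_)
  · have := mul_nonneg (sub_nonneg.2 hab) (sub_nonneg.2 (Set.mem_Ici.1 hx))
    linarith [sq_sub_sq x]
  · have hx_lt : x < (a + b) / 2 := Set.notMem_Ici.1 hx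
    have := mul_nonpos_of_nonneg_of_nonpos (sub_nonneg.2 hab) (sub_nonpos.2 hx_lt.le)
    linarith [sq_sub_sq x]

lemma gaussianReal_eq_map_sub_sqrt_mul (a : ℝ) (v : ℝ≥0) :
    gaussianReal a v = (gaussianReal 0 1).map (fun z ↦ a - √v * z) := by
  have map_eq : (gaussianReal 0 1).map (fun z ↦ a - √v * z) =
      ((gaussianReal 0 1).map (√v * ·)).map (a - ·) :=
    (Measure.map_map (by fun_prop) (by fun_prop)).symm
  rw [map_eq, gaussianReal_map_const_mul, gaussianReal_map_const_sub]
  congr 1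
  · simp
  · ext
    simp

lemma gaussianReal_real_Ici (hv : v ≠ 0) (a x : ℝ) :
    (gaussianReal a v).real (Set.Ici x) = Phi ((a - x) / √v) := by
  have sqrt_pos : 0 < √(v : ℝ) := by positivity
  have preimage_Ici : (fun z ↦ a - √v * z) ⁻¹' Set.Ici x = Set.Iic ((a - x) / √v) := by
    ext z
    rw [Set.mem_preimage, Set.mem_Ici, Set.mem_Iic, le_sub_comm, le_div_iff₀' sqrt_pos]
  rw [gaussianReal_eq_map_sub_sqrt_mul a v,
    map_measureReal_apply (by fun_prop) measurableSet_Ici, preimage_Ici, Phi, cdf_eq_real]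

lemma Phi_neg (x : ℝ) : Phi (-x) = 1 - Phi x := by
  have : NullSingletonClass (gaussianReal 0 1) := nullSingletonClass_gaussianReal one_ne_zero
  calc Phi (-x) = (gaussianReal 0 1).real (Set.Ici x) := by simp [gaussianReal_real_Ici]
    _ = (gaussianReal 0 1).real (Set.Ioi x) := measureReal_congr Ioi_ae_eq_Ici.symm
    _ = 1 - Phi x := by
      rw [← Set.compl_Iic, probReal_compl_eq_one_sub measurableSet_Iic, Phi, cdf_eq_real]

lemma totalError_gaussianReal_indicator_Ici_midpoint (hv : v ≠ 0) (a b : ℝ) :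
    totalError (gaussianReal a v) (gaussianReal b v) ((Set.Ici ((a + b) / 2)).indicator 1) =
      2 * Phi ((a - b) / (2 * √v)) := by
  have null_arg : (a - (a + b) / 2) / √v = (a - b) / (2 * √v) := by ring
  have alt_arg : (b - (a + b) / 2) / √v = -((a - b) / (2 * √v)) := by ring
  rw [totalError_indicator_one measurableSet_Ici, gaussianReal_real_Ici hv,
    gaussianReal_real_Ici hv, null_arg, alt_arg, Phi_neg]
  ring

end Gaussian

/-- For `P = N(0, s²)` and `Q = N(C, s²)`, no randomized test has total error
(type I + type II) smaller than `2·Φ(−C/(2s))`, the total error of the midpoint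
threshold test at `h* = C/2`. -/
theorem stmt_8 (s C : ℝ) (hs : 0 < s) (hC : 0 < C)
    (P Q : Measure ℝ) (hP : P = gaussianReal 0 (s ^ 2).toNNReal)
    (hQ : Q = gaussianReal C (s ^ 2).toNNReal)
    (φ : ℝ → ℝ) (hφmeas : Measurable φ) (hφ01 : ∀ x, φ x ∈ Set.Icc (0 : ℝ) 1) :
    (∫ x, φ x ∂P) + (1 - ∫ x, φ x ∂Q) ≥ 2 * Phi (-C / (2 * s)) := by
  subst hP hQ
  set v := (s ^ 2).toNNReal with hv_def
  have hv : v ≠ 0 := (Real.toNNReal_pos.2 (by positivity)).ne'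
  have sqrt_v : √(v : ℝ) = s := by
    rw [hv_def, Real.coe_toNNReal _ (sq_nonneg s), Real.sqrt_sq hs.le]
  calc 2 * Phi (-C / (2 * s))
      = totalError (gaussianReal 0 v) (gaussianReal C v)
          ((Set.Ici ((0 + C) / 2)).indicator 1) := by
        rw [totalError_gaussianReal_indicator_Ici_midpoint hv, sqrt_v, zero_sub]
    _ ≤ totalError (gaussianReal 0 v) (gaussianReal C v) φ :=
        totalError_indicator_le_of_isHahnDecomposition
          (isHahnDecomposition_gaussianReal_Ici hv hC.le)
          hφmeas.aemeasurable hφmeas.aemeasurable hφ01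
end
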